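/- arXiv:1401.6260 — 2 statements merged into one kernel-verified Lean document; each statement's English description precedes it below -/
import Mathlib

section
/- Let s_1, …, s_M (M ≥ 2) be binary sequences of common period L such that every subfamily of M−1 of them is SI (i.e., for every A ⊆ {1,…,M} with |A| ≤ M−1 nonempty, H((τ_i)_{i∈A}; A) is independent of the shifts). Then for any two systems of shifts τ = (τ_1,…,τ_M) and τ′ = (τ′_1,…,τ′_M) and every i with 1 ≤ i ≤ M−1, δ_i(τ→τ′) = (−1)^{M−i} · binom(M, i) · δ_M(τ→τ′), where δ_m(τ→τ′) = θ_m(τ′_1,…,τ′_M) − θ_m(τ_1,…,τ_M). -/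
open Finset

/-- Generalized Hamming cross-correlation of the sequences indexed by `A`. -/
def Hcorr {M L : ℕ} [NeZero L] (s : Fin M → ZMod L → ℕ)
    (A : Finset (Fin M)) (τ : Fin M → ZMod L) : ℕ :=
  ∑ t : ZMod L, ∏ i ∈ A, s i (t + τ i)

/-- `theta s m τ` counts the `t ∈ ZMod L` such that exactly `m` of the values
`s 1 (t + τ 1), …, s M (t + τ M)` equal `1`. -/
def theta {M L : ℕ} [NeZero L] (s : Fin M → ZMod L → ℕ)
    (m : ℕ) (τ : Fin M → ZMod L) : ℕ :=
  (Finset.univ.filter (fun t : ZMod L =>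
    (Finset.univ.filter (fun i : Fin M => s i (t + τ i) = 1)).card = m)).card

/-!
Let `S t` be the set of indices whose shifted sequence is `1` at time `t`. Expanding
`X ^ #(S t) = (1 + (X - 1)) ^ #(S t)` over the subsets of `S t` and summing over `t` shows that the
generating polynomial of the `θ m` is `∑ A, H(A) * (X - 1) ^ #A`. When two systems of shifts have
the same correlations on all proper subsets, only the term of the full index set survives in the
difference of their polynomials, so `δ m` is the coefficient of `X ^ m` in `δ M * (X - 1) ^ M`.
-/

section SetFamily

open Polynomial

variable {ι T : Type*} [Fintype T]

/-- The number of members of size `m` in a finite indexed set family; it abstracts `theta`. -/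
def levelCount (S : T → Finset ι) (m : ℕ) : ℕ :=
  #{t | #(S t) = m}

/-- The number of members containing `A` in a finite indexed set family; it abstracts `Hcorr`. -/
def supersetCount [DecidableEq ι] (S : T → Finset ι) (A : Finset ι) : ℕ :=
  #{t | A ⊆ S t}

/-- The generating polynomial of the sizes of the members of a finite family of sets. -/
noncomputable def sizeEnumerator (S : T → Finset ι) : ℤ[X] :=
  ∑ t, X ^ #(S t)

lemma coeff_sizeEnumerator (S : T → Finset ι) (m : ℕ) :
    (sizeEnumerator S).coeff m = levelCount S m := by
  simp only [sizeEnumerator, levelCount, finsetSum_coeff, coeff_X_pow, sum_boole, eq_comm]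

lemma supersetCount_empty [DecidableEq ι] (S : T → Finset ι) :
    supersetCount S ∅ = Fintype.card T := by
  simp [supersetCount]

variable [Fintype ι] [DecidableEq ι]

lemma supersetCount_univ (S : T → Finset ι) :
    supersetCount S univ = levelCount S (Fintype.card ι) := by
  simp only [supersetCount, levelCount, univ_subset_iff, card_eq_iff_eq_univ]

lemma sizeEnumerator_eq_sum_supersetCount (S : T → Finset ι) :
    sizeEnumerator S = ∑ A, (supersetCount S A : ℤ[X]) * (X - 1) ^ #A := by
  have expand (t : T) : (X : ℤ[X]) ^ #(S t) = ∑ A with A ⊆ S t, (X - 1) ^ #A := by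
    calc (X : ℤ[X]) ^ #(S t)
        = (X - 1 + 1) ^ #(S t) := by rw [sub_add_cancel]
      _ = ∑ A with A ⊆ S t, (X - 1) ^ #A := by
        simp only [← sum_pow_mul_eq_add_pow, one_pow, mul_one, filter_subset_univ]
  calc sizeEnumerator S
      = ∑ t, ∑ A, if A ⊆ S t then (X - 1) ^ #A else 0 := by
        simp only [sizeEnumerator, expand, sum_filter]
    _ = ∑ A, ∑ t, if A ⊆ S t then (X - 1) ^ #A else 0 := sum_comm
    _ = ∑ A, (supersetCount S A : ℤ[X]) * (X - 1) ^ #A := by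
        simp only [← sum_filter, sum_const, nsmul_eq_mul, supersetCount]

variable {T' : Type*} [Fintype T'] {S : T → Finset ι} {S' : T' → Finset ι}

lemma sizeEnumerator_sub_eq_mul_pow
    (h : ∀ A ≠ univ, supersetCount S A = supersetCount S' A) :
    sizeEnumerator S' - sizeEnumerator S =
      C ((levelCount S' (Fintype.card ι) : ℤ) - levelCount S (Fintype.card ι)) *
        (X + C (-1)) ^ Fintype.card ι := by
  rw [sizeEnumerator_eq_sum_supersetCount, sizeEnumerator_eq_sum_supersetCount,
    ← sum_sub_distrib, Fintype.sum_eq_single univ fun A hA => by rw [h A hA, sub_self],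
    supersetCount_univ, supersetCount_univ, card_univ, ← sub_mul]
  simp [sub_eq_add_neg]

-- For `m > card ι` the truncated exponent is harmless, as the binomial coefficient vanishes.
theorem stmt10_general (h : ∀ A ≠ univ, supersetCount S A = supersetCount S' A) (m : ℕ) :
    (levelCount S' m : ℤ) - levelCount S m =
      (-1) ^ (Fintype.card ι - m) * (Fintype.card ι).choose m *
        ((levelCount S' (Fintype.card ι) : ℤ) - levelCount S (Fintype.card ι)) := by
  rw [← coeff_sizeEnumerator S', ← coeff_sizeEnumerator S, ← coeff_sub,
    sizeEnumerator_sub_eq_mul_pow h, coeff_C_mul, mul_comm, coeff_X_add_C_pow]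

end SetFamily

section Sequences

variable {M L : ℕ} {s : Fin M → ZMod L → ℕ}

/-- The set of indices whose shifted sequence takes the value `1` at time `t`: the family of sets
to which a system of shifts is reduced. -/
def onesAt (s : Fin M → ZMod L → ℕ) (τ : Fin M → ZMod L) (t : ZMod L) : Finset (Fin M) :=
  {i | s i (t + τ i) = 1}

variable [NeZero L]

lemma theta_eq_levelCount (m : ℕ) (τ : Fin M → ZMod L) :
    theta s m τ = levelCount (onesAt s τ) m :=
  rfl

lemma Hcorr_eq_supersetCount (hbin : ∀ i t, s i t = 0 ∨ s i t = 1) (A : Finset (Fin M))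
    (τ : Fin M → ZMod L) : Hcorr s A τ = supersetCount (onesAt s τ) A := by
  have indicator (t : ZMod L) :
      ∏ i ∈ A, s i (t + τ i) = if A ⊆ onesAt s τ t then 1 else 0 := by
    split_ifs with hA
    · exact prod_eq_one fun i hi => (mem_filter_univ i).1 (hA hi)
    · obtain ⟨i, hi, hne⟩ := not_subset.1 hA
      exact prod_eq_zero hi ((hbin i _).resolve_right fun h => hne ((mem_filter_univ i).2 h))
  simp only [Hcorr, supersetCount, card_filter, indicator]

lemma supersetCount_onesAt_eq (hbin : ∀ i t, s i t = 0 ∨ s i t = 1)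
    {τ τ' : Fin M → ZMod L}
    (hτ : ∀ A : Finset (Fin M), A.Nonempty → #A ≤ M - 1 → Hcorr s A τ = Hcorr s A τ')
    {A : Finset (Fin M)} (hA : A ≠ univ) :
    supersetCount (onesAt s τ) A = supersetCount (onesAt s τ') A := by
  rcases A.eq_empty_or_nonempty with rfl | hne
  · rw [supersetCount_empty, supersetCount_empty]
  · have hcard : #A < M := by simpa using (card_lt_iff_ne_univ A).2 hA
    rw [← Hcorr_eq_supersetCount hbin, ← Hcorr_eq_supersetCount hbin,
      hτ A hne (Nat.le_sub_one_of_lt hcard)]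

end Sequences

theorem stmt10 (M L : ℕ) (hM : 2 ≤ M) (hL : 1 ≤ L) [NeZero L]
    (s : Fin M → ZMod L → ℕ) (hbin : ∀ i t, s i t = 0 ∨ s i t = 1)
    (hsub : ∀ A : Finset (Fin M), A.Nonempty → A.card ≤ M - 1 →
      ∀ τ τ' : Fin M → ZMod L, Hcorr s A τ = Hcorr s A τ') :
    ∀ (τ τ' : Fin M → ZMod L) (i : ℕ), 1 ≤ i → i ≤ M - 1 →
      ((theta s i τ' : ℤ) - (theta s i τ : ℤ))
        = (-1) ^ (M - i) * (Nat.choose M i : ℤ) *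
            ((theta s M τ' : ℤ) - (theta s M τ : ℤ)) := by
  intro τ τ' i _ _
  simpa only [theta_eq_levelCount, Fintype.card_fin] using
    stmt10_general (fun _ hA => supersetCount_onesAt_eq hbin
      (fun A hne hcard => hsub A hne hcard τ τ') hA) i
end

section
/- Let s_1, …, s_M (M ≥ 2) be binary sequences of common period L such that every subfamily of M−1 of them is SI (i.e., for every A ⊆ {1,…,M} with |A| ≤ M−1 nonempty, H((τ_i)_{i∈A}; A) is independent of the shifts). Then for any two systems of shifts τ = (τ_1,…,τ_M) and τ′ = (τ′_1,…,τ′_M) and every j with 1 ≤ j ≤ M−1, Σ_{i=j}^{M} binom(i, j) · δ_i(τ→τ′) = 0, where δ_i(τ→τ′) = θ_i(τ′_1,…,τ′_M) − θ_i(τ_1,…,τ_M). -/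
open Finset

/-!
Double count the pairs `(t, A)` where `A` is a set of `j` indices and all `s i (t + τ i)`, `i ∈ A`,
equal `1`. Fixing `A` gives the correlation of `A`; fixing `t` gives `(w t).choose j`, where `w t`
is the number of ones at time `t`. Grouping the times by weight, `∑ i, i.choose j * θ_i` is the sum
of the correlations of all `j`-element subfamilies, so it is unaffected by the shifts as soon as
these correlations are.
-/

/-- The column weight at time `t` of the array whose rows are the shifted sequences
`s i (· + τ i)`: the number of its entries equal to `1`. It is the statistic whose
distribution over `t` is recorded by `theta`. -/
def columnWeight {M L : ℕ} (s : Fin M → ZMod L → ℕ) (τ : Fin M → ZMod L) (t : ZMod L) : ℕ :=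
  #{i | s i (t + τ i) = 1}

theorem prod_eq_ite_subset_filter_eq_one {ι R : Type*} [CommMonoidWithZero R] [DecidableEq ι]
    [DecidableEq R] {f : ι → R} {s A : Finset ι} (hf : ∀ i ∈ A, f i = 0 ∨ f i = 1)
    (hA : A ⊆ s) :
    ∏ i ∈ A, f i = if A ⊆ {i ∈ s | f i = 1} then 1 else 0 := by
  split_ifs with hone
  · exact prod_eq_one fun i hi => (mem_filter.1 (hone hi)).2
  · obtain ⟨i, hi, hi_notMem⟩ := not_subset.1 hone
    have hi_ne_one : f i ≠ 1 := fun h => hi_notMem (mem_filter.2 ⟨hA hi, h⟩)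
    exact prod_eq_zero hi ((hf i hi).resolve_right hi_ne_one)

theorem sum_powersetCard_prod_eq_choose {ι R : Type*} [CommSemiring R] [DecidableEq R]
    {f : ι → R} {s : Finset ι} (hf : ∀ i ∈ s, f i = 0 ∨ f i = 1) (j : ℕ) :
    ∑ A ∈ powersetCard j s, ∏ i ∈ A, f i = (#{i ∈ s | f i = 1}).choose j := by
  classical
  have hfilter : {A ∈ powersetCard j s | A ⊆ {i ∈ s | f i = 1}} =
      powersetCard j {i ∈ s | f i = 1} := by
    grind
  calc ∑ A ∈ powersetCard j s, ∏ i ∈ A, f i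
      = ∑ A ∈ powersetCard j s, if A ⊆ {i ∈ s | f i = 1} then 1 else 0 :=
        sum_congr rfl fun A hA =>
          have hAs := (mem_powersetCard.1 hA).1
          prod_eq_ite_subset_filter_eq_one (fun i hi => hf i (hAs hi)) hAs
    _ = (#{i ∈ s | f i = 1}).choose j := by
        rw [sum_boole, hfilter, card_powersetCard]

theorem sum_Icc_choose_mul_card_fiber {α : Type*} {s : Finset α} {w : α → ℕ} {n : ℕ}
    (hw : ∀ a ∈ s, w a ≤ n) (j : ℕ) :
    ∑ i ∈ Icc j n, i.choose j * #{a ∈ s | w a = i} = ∑ a ∈ s, (w a).choose j := by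
  calc ∑ i ∈ Icc j n, i.choose j * #{a ∈ s | w a = i}
      = ∑ i ∈ Iic n, i.choose j * #{a ∈ s | w a = i} := by
        refine sum_subset Icc_subset_Iic_self fun i hi hij => ?_
        have hlt : i < j := by grind
        rw [Nat.choose_eq_zero_of_lt hlt, zero_mul]
    _ = ∑ i ∈ Iic n, ∑ a ∈ s with w a = i, i.choose j := by
        simp only [sum_const, smul_eq_mul, mul_comm]
    _ = ∑ a ∈ s, (w a).choose j :=
        sum_fiberwise_of_maps_to' (fun a ha => mem_Iic.2 (hw a ha)) (Nat.choose · j)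

section

variable {M L : ℕ} (s : Fin M → ZMod L → ℕ)

theorem columnWeight_le (τ : Fin M → ZMod L) (t : ZMod L) : columnWeight s τ t ≤ M :=
  card_finset_fin_le _

variable [NeZero L]

theorem sum_choose_mul_theta (τ : Fin M → ZMod L) (j : ℕ) :
    ∑ i ∈ Icc j M, i.choose j * theta s i τ = ∑ t, (columnWeight s τ t).choose j :=
  sum_Icc_choose_mul_card_fiber (fun t _ => columnWeight_le s τ t) j

variable {s}

theorem sum_powersetCard_Hcorr (hbin : ∀ i t, s i t = 0 ∨ s i t = 1)
    (τ : Fin M → ZMod L) (j : ℕ) :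
    ∑ A ∈ powersetCard j univ, Hcorr s A τ = ∑ t, (columnWeight s τ t).choose j := by
  calc ∑ A ∈ powersetCard j univ, Hcorr s A τ
      = ∑ t, ∑ A ∈ powersetCard j univ, ∏ i ∈ A, s i (t + τ i) := sum_comm
    _ = ∑ t, (columnWeight s τ t).choose j :=
        sum_congr rfl fun t _ =>
          sum_powersetCard_prod_eq_choose (fun i _ => hbin i (t + τ i)) j

theorem sum_choose_mul_theta_eq_sum_Hcorr (hbin : ∀ i t, s i t = 0 ∨ s i t = 1)
    (τ : Fin M → ZMod L) (j : ℕ) :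
    ∑ i ∈ Icc j M, i.choose j * theta s i τ = ∑ A ∈ powersetCard j univ, Hcorr s A τ :=
  (sum_choose_mul_theta s τ j).trans (sum_powersetCard_Hcorr hbin τ j).symm

theorem stmt11_general (hbin : ∀ i t, s i t = 0 ∨ s i t = 1) {τ τ' : Fin M → ZMod L} {j : ℕ}
    (hcorr : ∀ A : Finset (Fin M), #A = j → Hcorr s A τ = Hcorr s A τ') :
    ∑ i ∈ Icc j M, (i.choose j : ℤ) * ((theta s i τ' : ℤ) - (theta s i τ : ℤ)) = 0 := by
  have hmoment : ∑ i ∈ Icc j M, i.choose j * theta s i τ' =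
      ∑ i ∈ Icc j M, i.choose j * theta s i τ := by
    simp only [sum_choose_mul_theta_eq_sum_Hcorr hbin]
    exact sum_congr rfl fun A hA => (hcorr A (mem_powersetCard.1 hA).2).symm
  simp only [mul_sub, sum_sub_distrib, sub_eq_zero]
  exact_mod_cast hmoment

end

theorem stmt11 (M L : ℕ) (hM : 2 ≤ M) (hL : 1 ≤ L) [NeZero L]
    (s : Fin M → ZMod L → ℕ) (hbin : ∀ i t, s i t = 0 ∨ s i t = 1)
    (hsub : ∀ A : Finset (Fin M), A.Nonempty → A.card ≤ M - 1 →
      ∀ τ τ' : Fin M → ZMod L, Hcorr s A τ = Hcorr s A τ') :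
    ∀ (τ τ' : Fin M → ZMod L) (j : ℕ), 1 ≤ j → j ≤ M - 1 →
      ∑ i ∈ Finset.Icc j M,
        (Nat.choose i j : ℤ) * ((theta s i τ' : ℤ) - (theta s i τ : ℤ)) = 0 := by
  intro τ τ' j hj hjM
  exact stmt11_general hbin fun A hA => hsub A (card_pos.1 (by omega)) (by omega) τ τ'
end
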